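/- Let F be a field of characteristic 2, let K/F be a purely inseparable extension of exponent 1 (K² ⊆ F), and let T ⊆ F be a 2-independent set such that K = F(√t : t ∈ T). Then W_q(K/F) = Σ_{t∈T} ⟨1,t⟩_b ⊗ W_q(F). -/

import Mathlib

/-!  A concrete coefficient-matrix model of (possibly singular) finite-dimensional
quadratic forms over a field, suitable for characteristic 2. -/

/-- Coefficient representation of a (finite-dimensional) quadratic form over a field `F`:
the form of dimension `dim` given by `q(x) = ∑ i j, c i j * x i * x j`. -/
structure QF (F : Type*) [Field F] : Type _ where
  dim : ℕ
  c : Matrix (Fin dim) (Fin dim) F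

namespace QF

variable {F E : Type*} [Field F] [Field E]

/-- Evaluation of the quadratic form at a vector. -/
def eval (q : QF F) (x : Fin q.dim → F) : F :=
  ∑ i, ∑ j, q.c i j * x i * x j

/-- Scalar extension (base change) of a quadratic form along a ring homomorphism. -/
def map (f : F →+* E) (q : QF F) : QF E :=
  ⟨q.dim, fun i j => f (q.c i j)⟩

/-- Orthogonal sum. -/
def orthSum (q q' : QF F) : QF F :=
  ⟨q.dim + q'.dim,
    Matrix.reindex finSumFinEquiv finSumFinEquiv (Matrix.fromBlocks q.c 0 0 q'.c)⟩

/-- Scaling `a • q`. -/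
def smul (a : F) (q : QF F) : QF F := ⟨q.dim, a • q.c⟩

/-- The nonsingular binary quadratic form `[a,b] : (x,y) ↦ ax² + xy + by²`. -/
def bin (a b : F) : QF F := ⟨2, !![a, 1; 0, b]⟩

/-- The diagonal (totally singular) quadratic form `⟨a₁, …, aₙ⟩`. -/
def diag {n : ℕ} (v : Fin n → F) : QF F := ⟨n, Matrix.diagonal v⟩

/-- The zero-dimensional quadratic form. -/
def nil : QF F := { dim := 0, c := 0 }

/-- The one-dimensional form `⟨1⟩`. -/
def unit : QF F := diag (fun _ : Fin 1 => (1 : F))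

/-- Orthogonal sum of a list of forms. -/
def sumList (l : List (QF F)) : QF F := l.foldr orthSum nil

/-- `pfTensor [a₁,…,aₙ] q` is the tensor product `⟨⟨a₁,…,aₙ⟩⟩_b ⊗ q` of the bilinear
Pfister form `⟨⟨a₁,…,aₙ⟩⟩_b = ⟨1,a₁⟩_b ⊗ ⋯ ⊗ ⟨1,aₙ⟩_b` with the quadratic form `q`,
via `⟨1,a⟩_b ⊗ q ≅ q ⊥ a·q`. -/
def pfTensor (l : List F) (q : QF F) : QF F :=
  l.foldr (fun a r => orthSum r (smul a r)) q

/-- The hyperbolic plane `ℍ ≅ [0,0]`. -/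
def hypPlane : QF F := bin 0 0

/-- The orthogonal sum of `k` hyperbolic planes. -/
def hyp (k : ℕ) : QF F := sumList (List.replicate k hypPlane)

/-- The `l`-dimensional zero form `⟨0,…,0⟩`. -/
def zeros (l : ℕ) : QF F := diag (fun _ : Fin l => (0 : F))

/-- Isometry of quadratic forms. -/
def Isometric (q q' : QF F) : Prop :=
  ∃ e : (Fin q.dim → F) ≃ₗ[F] (Fin q'.dim → F), ∀ x, q'.eval (e x) = q.eval x

/-- Anisotropy: the form has no nontrivial zero. -/
def Anisotropic (q : QF F) : Prop := ∀ x, q.eval x = 0 → x = 0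

/-- A quadratic form is nonsingular if the radical of its polar form
`B_q(x,y) = q(x+y) - q(x) - q(y)` (with matrix `c + cᵀ`) is trivial. -/
def Nonsingular (q : QF F) : Prop := ∀ x, (q.c + q.c.transpose).mulVec x = 0 → x = 0

/-- A quadratic form is totally singular if its polar form vanishes identically. -/
def TotallySingular (q : QF F) : Prop := q.c + q.c.transpose = 0

/-- A quadratic form is hyperbolic if it is isometric to an orthogonal sum of
hyperbolic planes. -/
def Hyperbolic (q : QF F) : Prop := ∃ k, Isometric q (hyp k)

/-- Witt equivalence: `q ~ q'` iff the anisotropic parts agree, equivalently the two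
forms become isometric after adding suitable numbers of hyperbolic planes and zero
forms. -/
def WittEquiv (q q' : QF F) : Prop :=
  ∃ k k' l l', Isometric (orthSum q (orthSum (hyp k) (zeros l)))
    (orthSum q' (orthSum (hyp k') (zeros l')))

/-- `AnisoPartOf φ q` : `φ` is (isometric to) the anisotropic part of `q`, i.e. `φ` is
anisotropic and `q ≅ k × ℍ ⊥ φ ⊥ ⟨0,…,0⟩`. -/
def AnisoPartOf (φ q : QF F) : Prop :=
  Anisotropic φ ∧ ∃ k l, Isometric q (orthSum (hyp k) (orthSum φ (zeros l)))

/-- `Dominates q' q` means `q ≺ q'`, i.e. `q'` dominates `q`: there is an injective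
linear map `t` of the underlying spaces with `q' ∘ t = q`. -/
def Dominates (q' q : QF F) : Prop :=
  ∃ t : (Fin q.dim → F) →ₗ[F] (Fin q'.dim → F), Function.Injective t ∧
    ∀ x, q'.eval (t x) = q.eval x

/-- The affine quadric polynomial `∑ cᵢⱼ XᵢXⱼ` of a quadratic form. -/
noncomputable def toPoly (q : QF F) : MvPolynomial (Fin q.dim) F :=
  ∑ i, ∑ j, MvPolynomial.C (q.c i j) * (MvPolynomial.X i * MvPolynomial.X j)

/-- The affine coordinate ring of the (reduced) quadric `q = 0`. -/
abbrev CoordRing (q : QF F) : Type _ :=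
  MvPolynomial (Fin q.dim) F ⧸ (Ideal.span {q.toPoly}).radical

/-- The function field of the quadric `q = 0` (assuming the quadric is integral). -/
abbrev FunctionField (q : QF F) [IsDomain (CoordRing q)] : Type _ :=
  FractionRing (CoordRing q)

/-- The canonical ring homomorphism from a base field `F` into the function field of a
quadric defined over an extension field `K` of `F`. -/
noncomputable def toFunctionField {K : Type*} [Field K] [Algebra F K] (q : QF K)
    [IsDomain (CoordRing q)] : F →+* FunctionField q :=
  (algebraMap (CoordRing q) (FunctionField q)).comp
    ((algebraMap K (CoordRing q)).comp (algebraMap F K))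

end QF


namespace WK
open QuadraticMap

section abstractForms
variable {k : Type*} [Field k]
variable {V' : Type*} [AddCommGroup V'] [Module k V']
variable {V : Type*} [AddCommGroup V] [Module k V]

/-- A form is metabolic if it has a totally isotropic subspace containing its own orthogonal. -/
def Met (Q : QuadraticForm k V) : Prop :=
  ∃ L : Submodule k V, (∀ x ∈ L, Q x = 0) ∧ ∀ x, (∀ y ∈ L, polar Q x y = 0) → x ∈ L

/-- Nondegeneracy of the polar form. -/
def NS (Q : QuadraticForm k V) : Prop := ∀ x, (∀ y, polar Q x y = 0) → x = 0

lemma polar_eqv {Q : QuadraticForm k V} {Q' : QuadraticForm k V'} (e : Q.IsometryEquiv Q')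
    (x y : V) : polar Q' (e x) (e y) = polar Q x y := by
  simp [polar, ← map_add]

lemma Met.equiv {Q : QuadraticForm k V} {Q' : QuadraticForm k V'} (h : Q.Equivalent Q')
    (hQ : Met Q) : Met Q' := by
  obtain ⟨e⟩ := h
  obtain ⟨L, h1, h2⟩ := hQ
  refine ⟨L.comap (e.symm.toLinearEquiv : V' →ₗ[k] V), ?_, ?_⟩
  · intro x hx
    have := h1 _ hx
    rw [← this]
    exact (e.symm.map_app x).symm
  · intro x hx
    apply h2
    intro y hy
    have := hx (e y) (by
      simp only [Submodule.mem_comap]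
      convert hy
      exact e.symm_apply_apply y)
    rw [← this]
    have h3 := polar_eqv e.symm x (e y)
    rw [← h3]
    congr 1
    exact (e.symm_apply_apply y).symm

lemma NS.equiv {Q : QuadraticForm k V} {Q' : QuadraticForm k V'} (h : Q.Equivalent Q')
    (hQ : NS Q) : NS Q' := by
  obtain ⟨e⟩ := h
  intro x hx
  have : e.symm x = 0 := by
    apply hQ
    intro y
    have h3 := polar_eqv e.symm x (e y)
    rw [hx] at h3
    rw [← h3]
    congr 1
    exact (e.symm_apply_apply y).symm
  have h4 : e (e.symm x) = x := e.apply_symm_apply x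
  rw [← h4, this]
  exact map_zero e.toLinearEquiv

lemma Met.prod {Q : QuadraticForm k V} {Q' : QuadraticForm k V'} (h : Met Q) (h' : Met Q') :
    Met (Q.prod Q') := by
  obtain ⟨L, h1, h2⟩ := h
  obtain ⟨L', h1', h2'⟩ := h'
  refine ⟨L.prod L', ?_, ?_⟩
  · rintro ⟨x, y⟩ ⟨hx, hy⟩
    simp [h1 x hx, h1' y hy]
  · rintro ⟨x, y⟩ h
    refine ⟨h2 _ fun z hz => ?_, h2' _ fun z hz => ?_⟩
    · simpa using h (z, 0) ⟨hz, L'.zero_mem⟩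
    · simpa using h (0, z) ⟨L.zero_mem, hz⟩

lemma NS.prod {Q : QuadraticForm k V} {Q' : QuadraticForm k V'} (h : NS Q) (h' : NS Q') :
    NS (Q.prod Q') := by
  rintro ⟨x, y⟩ hh
  ext
  · exact h _ fun z => by simpa using hh (z, 0)
  · exact h' _ fun z => by simpa using hh (0, z)

lemma Met.self [CharP k 2] {Q : QuadraticForm k V} (h : NS Q) : Met (Q.prod Q) := by
  refine ⟨LinearMap.ker (LinearMap.fst k V V - LinearMap.snd k V V), ?_, ?_⟩
  · rintro ⟨x, y⟩ hx
    have : x = y := by simpa [sub_eq_zero] using hx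
    subst this
    simp [CharTwo.add_self_eq_zero]
  · rintro ⟨x, y⟩ hh
    have : x - y = 0 := by
      apply h
      intro z
      have := hh (z, z) (by simp)
      simp only [polar_prod] at this
      rw [polar_sub_left, sub_eq_zero]
      exact CharTwo.add_eq_zero.mp this
    simpa using this

/-- representability of functionals -/
lemma NS.repr [FiniteDimensional k V] {Q : QuadraticForm k V} (h : NS Q) (f : V →ₗ[k] k) :
    ∃ v, ∀ w, polar Q v w = f w := by
  have hinj : Function.Injective (polarBilin Q) := by
    rw [← LinearMap.ker_eq_bot, LinearMap.ker_eq_bot']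
    intro x hx
    apply h
    intro y
    have := LinearMap.congr_fun hx y
    simpa using this
  have hs : Function.Surjective (polarBilin Q) := by
    rw [← LinearMap.injective_iff_surjective_of_finrank_eq_finrank]
    · exact hinj
    · exact (Subspace.dual_finrank_eq (K := k) (V := V)).symm
  obtain ⟨v, hv⟩ := hs f
  exact ⟨v, fun w => by rw [← hv]; simp⟩

/-- Witt cancellation for metabolic forms. -/
lemma Met.cancel [FiniteDimensional k V'] {Q : QuadraticForm k V} {R : QuadraticForm k V'}
    (h : Met (Q.prod R)) (hR : Met R) (hn : NS R) : Met Q := by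
  obtain ⟨L, h1, h2⟩ := h
  obtain ⟨M, m1, m2⟩ := hR
  refine ⟨(L ⊓ Submodule.comap (LinearMap.snd k V V') M).map (LinearMap.fst k V V'), ?_, ?_⟩
  · rintro x ⟨⟨x', m⟩, ⟨hL, hM⟩, rfl⟩
    have := h1 _ hL
    have h3 : R m = 0 := m1 _ hM
    simpa [h3] using this
  · intro x hx
    let g : L →ₗ[k] V' ⧸ M := M.mkQ ∘ₗ (LinearMap.snd k V V') ∘ₗ L.subtype
    let f : L →ₗ[k] k := (polarBilin Q x) ∘ₗ (LinearMap.fst k V V') ∘ₗ L.subtype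
    have hker : LinearMap.ker g ≤ LinearMap.ker f := by
      rintro ⟨⟨y, z⟩, hyz⟩ hg
      have hz : z ∈ M := by simpa [g] using hg
      have := hx y ⟨⟨y, z⟩, ⟨hyz, hz⟩, rfl⟩
      simpa [f] using this
    obtain ⟨f', hf'⟩ := LinearMap.exists_extend
      (((LinearMap.ker g).liftQ f hker) ∘ₗ g.quotKerEquivRange.symm.toLinearMap)
    have hff : ∀ l : L, f' (g l) = f l := by
      intro l
      have := LinearMap.congr_fun hf' ⟨g l, LinearMap.mem_range_self g l⟩
      simp only [LinearMap.comp_apply, Submodule.subtype_apply] at this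
      rw [this]
      have h5 : g.quotKerEquivRange.symm ⟨g l, LinearMap.mem_range_self g l⟩
          = (LinearMap.ker g).mkQ l := by
        rw [LinearEquiv.symm_apply_eq]
        rfl
      erw [h5]
      simp
    obtain ⟨m, hm⟩ := hn.repr (f' ∘ₗ M.mkQ)
    have hmM : m ∈ M := by
      apply m2
      intro y hy
      rw [hm]
      simp [(Submodule.Quotient.mk_eq_zero M).mpr hy]
    refine ⟨(x, -m), ⟨?_, by simpa using hmM⟩, rfl⟩
    apply h2
    rintro ⟨y, z⟩ hyz
    have h6 := hff ⟨(y, z), hyz⟩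
    have h7 := hm z
    simp only [polar_prod, polar_neg_left]
    have h8 : polar Q x y = polar R m z := by
      rw [h7]
      simpa [f, g] using h6.symm
    rw [h8]; ring

/-- stripping off a zero form -/
lemma Met.strip {Q : QuadraticForm k V} (h : Met (Q.prod (0 : QuadraticForm k V'))) :
    Met Q := by
  obtain ⟨L, h1, h2⟩ := h
  have hz : ∀ z : V', ((0 : V), z) ∈ L := by
    intro z
    apply h2
    rintro ⟨y, w⟩ _
    simp [polar]
  refine ⟨L.comap (LinearMap.inl k V V'), ?_, ?_⟩
  · intro x hx
    simpa using h1 _ hx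
  · intro x hx
    apply h2
    rintro ⟨y, w⟩ hy
    have h3 : (y, (0 : V')) ∈ L := by
      have := L.sub_mem hy (hz w)
      simpa using this
    have := hx y h3
    simp [polar] at this ⊢
    exact this

lemma Met.zero : Met (0 : QuadraticForm k V) :=
  ⟨⊤, by simp, by simp⟩

lemma quad_sum {ι : Type*} [DecidableEq ι] (Q : QuadraticForm k V) (v : ι → V)
    (hv : ∀ i j, i ≠ j → polar Q (v i) (v j) = 0) (x : ι → k) (s : Finset ι) :
    Q (∑ i ∈ s, x i • v i) = ∑ i ∈ s, x i ^ 2 * Q (v i) := by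
  induction s using Finset.induction_on with
  | empty => simp
  | insert a s ha ih =>
    rw [Finset.sum_insert ha, Finset.sum_insert ha, QuadraticMap.map_add Q, ih]
    have : polar Q (x a • v a) (∑ i ∈ s, x i • v i) = 0 := by
      rw [← polarBilin_apply_apply, map_sum]
      apply Finset.sum_eq_zero
      intro i hi
      have : a ≠ i := by rintro rfl; exact ha hi
      simp [hv a i this]
    rw [this, QuadraticMap.map_smul]
    simp [pow_two]

lemma polar_sum_left {ι : Type*} (Q : QuadraticForm k V) (v : ι → V) (x : ι → k) (s : Finset ι)
    (w : V) : polar Q (∑ i ∈ s, x i • v i) w = ∑ i ∈ s, x i * polar Q (v i) w := by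
  rw [← polarBilin_apply_apply, map_sum]
  simp

/-- Normal form relative to a Lagrangian of the polar form. -/
lemma normalForm [CharP k 2] [FiniteDimensional k V] (Q : QuadraticForm k V) (hQ : NS Q)
    (L : Submodule k V) (h1 : ∀ x ∈ L, ∀ y ∈ L, polar Q x y = 0)
    (h2 : ∀ x, (∀ y ∈ L, polar Q x y = 0) → x ∈ L) :
    ∃ (n : ℕ) (a b : Fin n → k) (e : ((Fin n → k) × (Fin n → k)) ≃ₗ[k] V),
      (∀ x y, Q (e (x, y)) = ∑ i, (a i * x i ^ 2 + x i * y i + b i * y i ^ 2)) ∧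
      ((∀ x ∈ L, Q x = 0) → a = 0 ∧ b = 0) := by
  let n := Module.finrank k L
  let l : Module.Basis (Fin n) k L := Module.finBasis k L
  have hs : ∀ i, ∃ s : V, ∀ j, polar Q s (l j) = if i = j then 1 else 0 := by
    intro i
    obtain ⟨f, hf⟩ := LinearMap.exists_extend (l.coord i)
    obtain ⟨s, hs⟩ := hQ.repr f
    refine ⟨s, fun j => ?_⟩
    rw [hs]
    have := LinearMap.congr_fun hf (l j)
    simp only [LinearMap.comp_apply, Submodule.subtype_apply] at this
    rw [this]
    simp [Finsupp.single_apply, eq_comm]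
  choose s hs using hs
  let c : Fin n → Fin n → k := fun i j =>
    if i < j then polar Q (s i) (s j) else if i = j then Q (s i) else 0
  let s' : Fin n → V := fun i => s i + ∑ j, c i j • (l j : V)
  have hll : ∀ i j, polar Q (l i : V) (l j) = 0 := fun i j => h1 _ (l i).2 _ (l j).2
  have hsumL : ∀ (x : Fin n → k), (∑ j, x j • (l j : V)) ∈ L := fun x =>
    Submodule.sum_mem _ fun j _ => L.smul_mem _ (l j).2
  have hs'l : ∀ i j, polar Q (s' i) (l j) = if i = j then 1 else 0 := by
    intro i j
    simp only [s']
    rw [polar_add_left, hs, polar_sum_left]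
    simp [hll]
  have hs's' : ∀ i j, polar Q (s' i) (s' j) = 0 := by
    have key : ∀ i j, polar Q (s' i) (s' j) = polar Q (s i) (s j) + c i j + c j i := by
      intro i j
      have e1 : polar Q (s' i) (s' j) = polar Q (s' i) (s j) + c j i := by
        conv_lhs => rw [show s' j = s j + ∑ m, c j m • (l m : V) from rfl]
        rw [polar_add_right, polar_comm Q _ (∑ m, _), polar_sum_left]
        congr 1
        simp_rw [polar_comm Q (l _ : V), hs'l]
        simp
      rw [e1]
      congr 1
      simp only [s']
      rw [polar_add_left, polar_sum_left]
      simp_rw [polar_comm Q (l _ : V), hs]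
      simp
    intro i j
    rw [key]
    rcases lt_trichotomy i j with h | h | h
    · simp [c, h, h.not_gt, h.ne', CharTwo.add_self_eq_zero]
    · subst h
      simp [c, CharTwo.add_self_eq_zero, CharTwo.two_eq_zero]
    · simp [c, h, h.not_gt, h.ne', polar_comm Q (s j), CharTwo.add_self_eq_zero]
  let e0 : ((Fin n → k) × (Fin n → k)) →ₗ[k] V :=
    LinearMap.coprod (Fintype.linearCombination k (fun i => (l i : V)))
      (Fintype.linearCombination k s')
  have he0 : ∀ x y, e0 (x, y) = (∑ i, x i • (l i : V)) + ∑ i, y i • s' i := by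
    intro x y
    simp [e0, Fintype.linearCombination_apply]
  have hpl : ∀ x y j, polar Q (e0 (x, y)) (l j) = y j := by
    intro x y j
    rw [he0, polar_add_left, polar_sum_left, polar_sum_left]
    simp [hll, hs'l]
  have hps : ∀ x y j, polar Q (e0 (x, y)) (s' j) = x j := by
    intro x y j
    rw [he0, polar_add_left, polar_sum_left, polar_sum_left]
    simp_rw [polar_comm Q (l _ : V), hs'l, hs's']
    simp
  have hinj : Function.Injective e0 := by
    rw [← LinearMap.ker_eq_bot, LinearMap.ker_eq_bot']
    rintro ⟨x, y⟩ h
    ext j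
    · have := hps x y j
      rw [h] at this
      simpa using this.symm
    · have := hpl x y j
      rw [h] at this
      simpa using this.symm
  have hsurj : Function.Surjective e0 := by
    intro v
    let y : Fin n → k := fun j => polar Q v (l j)
    have hv : v - ∑ i, y i • s' i ∈ L := by
      apply h2
      have : ∀ j, polar Q (v - ∑ i, y i • s' i) (l j) = 0 := by
        intro j
        rw [polar_sub_left, polar_sum_left]
        simp [hs'l, y]
      intro w hw
      have hw' := l.sum_repr ⟨w, hw⟩
      have hw2 := congrArg (Subtype.val) hw'
      simp only [Submodule.coe_sum, Submodule.coe_smul] at hw2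
      rw [← hw2, polar_comm, polar_sum_left]
      apply Finset.sum_eq_zero
      intro j _
      rw [polar_comm, this, mul_zero]
    have hw' := l.sum_repr ⟨_, hv⟩
    have hw2 := congrArg (Subtype.val) hw'
    simp only [Submodule.coe_sum, Submodule.coe_smul] at hw2
    refine ⟨(fun i => l.repr ⟨_, hv⟩ i, y), ?_⟩
    rw [he0, hw2]
    simp
  have hbij : Function.Bijective e0 := ⟨hinj, hsurj⟩
  refine ⟨n, fun i => Q (l i), fun i => Q (s' i), LinearEquiv.ofBijective e0 hbij, ?_, ?_⟩
  · intro x y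
    rw [LinearEquiv.ofBijective_apply, he0, QuadraticMap.map_add Q,
      quad_sum Q _ (fun i j _ => hll i j), quad_sum Q _ (fun i j _ => hs's' i j)]
    have : polar Q (∑ i, x i • (l i : V)) (∑ i, y i • s' i) = ∑ i, x i * y i := by
      rw [polar_sum_left]
      refine Finset.sum_congr rfl fun i _ => ?_
      rw [polar_comm, polar_sum_left]
      simp [hs'l]
    rw [this]
    simp only [Finset.sum_add_distrib]
    simp_rw [mul_comm (Q _)]
    ring
  · intro h0
    refine ⟨funext fun i => h0 _ (l i).2, funext fun i => ?_⟩
    simp only [s', Pi.zero_apply]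
    rw [QuadraticMap.map_add Q, h0 _ (hsumL _), polar_comm, polar_sum_left]
    simp_rw [polar_comm Q (l _ : V), hs]
    simp [c, CharTwo.add_self_eq_zero]

lemma exists_polarLagrangian [CharP k 2] [FiniteDimensional k V] (Q : QuadraticForm k V) :
    ∃ L : Submodule k V, (∀ x ∈ L, ∀ y ∈ L, polar Q x y = 0) ∧
      ∀ x, (∀ y ∈ L, polar Q x y = 0) → x ∈ L := by
  let S : Set (Submodule k V) := {L | ∀ x ∈ L, ∀ y ∈ L, polar Q x y = 0}
  have hS : S.Nonempty := ⟨⊥, by simp [S]⟩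
  obtain ⟨L, hL, hmax⟩ := (wellFounded_gt (α := Submodule k V)).has_min S hS
  refine ⟨L, hL, fun x hx => ?_⟩
  by_contra hxL
  have hxx : polar Q x x = 0 := by rw [polar_self, CharTwo.two_nsmul]
  refine hmax (L ⊔ Submodule.span k {x}) ?_ ?_
  · intro u hu v hv
    obtain ⟨u1, hu1, u2, hu2, rfl⟩ := Submodule.mem_sup.mp hu
    obtain ⟨v1, hv1, v2, hv2, rfl⟩ := Submodule.mem_sup.mp hv
    obtain ⟨c, rfl⟩ := Submodule.mem_span_singleton.mp hu2
    obtain ⟨d, rfl⟩ := Submodule.mem_span_singleton.mp hv2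
    simp [polar_add_left, polar_add_right, polar_smul_left, polar_smul_right, hL _ hu1 _ hv1,
      hx _ hv1, hxx, polar_comm Q u1 x, hx _ hu1]
  · refine lt_of_le_of_ne le_sup_left fun h => hxL ?_
    rw [h]
    exact Submodule.mem_sup_right (Submodule.mem_span_singleton_self x)

end abstractForms

section bridge
variable {F E : Type*} [Field F] [Field E]

/-- The Mathlib quadratic form of a coefficient matrix. -/
noncomputable def toQ (q : QF F) : QuadraticForm F (Fin q.dim → F) :=
  LinearMap.BilinMap.toQuadraticMap (Matrix.toBilin' q.c)

lemma toQ_apply (q : QF F) (x : Fin q.dim → F) : toQ q x = q.eval x := by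
  simp only [toQ, LinearMap.BilinMap.toQuadraticMap_apply, Matrix.toBilin'_apply, QF.eval]
  refine Finset.sum_congr rfl fun i _ => Finset.sum_congr rfl fun j _ => ?_
  ring

lemma iso_iff {q q' : QF F} : QF.Isometric q q' ↔ (toQ q).Equivalent (toQ q') := by
  constructor
  · rintro ⟨e, he⟩
    exact ⟨⟨e, fun x => by simpa [toQ_apply] using he x⟩⟩
  · rintro ⟨e⟩
    refine ⟨e.toLinearEquiv, fun x => ?_⟩
    rw [← toQ_apply, ← toQ_apply]
    exact e.map_app x

/-- splitting coordinates -/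
noncomputable def splitEquiv (F : Type*) [Field F] (m n : ℕ) :
    (Fin (m + n) → F) ≃ₗ[F] (Fin m → F) × (Fin n → F) :=
  (LinearEquiv.funCongrLeft F F (finSumFinEquiv (m := m) (n := n))).trans
    (LinearEquiv.sumArrowLequivProdArrow (Fin m) (Fin n) F F)

lemma orthSum_eval (q q' : QF F) (x : Fin (q.dim + q'.dim) → F) :
    (q.orthSum q').eval x = q.eval (splitEquiv F q.dim q'.dim x).1
      + q'.eval (splitEquiv F q.dim q'.dim x).2 := by
  unfold QF.eval QF.orthSum splitEquiv
  simp only [Matrix.reindex_apply, Matrix.submatrix_apply]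
  rw [Fin.sum_univ_add]
  simp_rw [Fin.sum_univ_add]
  simp [LinearEquiv.funCongrLeft, LinearMap.funLeft]

lemma orth_equiv (q q' : QF F) :
    (toQ (q.orthSum q')).Equivalent ((toQ q).prod (toQ q')) := by
  refine ⟨⟨splitEquiv F q.dim q'.dim, fun x => ?_⟩⟩
  have h1 := orthSum_eval q q' x
  rw [← toQ_apply, ← toQ_apply, ← toQ_apply] at h1
  exact h1.symm

lemma polar_toQ (q : QF F) (x y : Fin q.dim → F) :
    polar (toQ q) x y = y ⬝ᵥ ((q.c + q.c.transpose).mulVec x) := by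
  rw [toQ, LinearMap.BilinMap.polar_toQuadraticMap, Matrix.toBilin'_apply', Matrix.toBilin'_apply',
    Matrix.add_mulVec, dotProduct_add, add_comm]
  congr 1
  rw [Matrix.mulVec_transpose, dotProduct_comm y, Matrix.dotProduct_mulVec]

lemma ns_iff (q : QF F) : q.Nonsingular ↔ NS (toQ q) := by
  unfold QF.Nonsingular NS
  refine forall_congr' fun x => ?_
  simp_rw [polar_toQ]
  refine imp_congr_left ?_
  constructor
  · intro h y
    simp [h]
  · intro h
    exact dotProduct_eq_zero _ (fun w => by rw [dotProduct_comm]; exact h w)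

lemma iso_refl (q : QF F) : QF.Isometric q q := iso_iff.2 (QuadraticMap.Equivalent.refl _)
lemma iso_symm {q q' : QF F} (h : QF.Isometric q q') : QF.Isometric q' q :=
  iso_iff.2 (iso_iff.1 h).symm
lemma iso_trans {q q' q'' : QF F} (h : QF.Isometric q q') (h' : QF.Isometric q' q'') :
    QF.Isometric q q'' :=
  iso_iff.2 ((iso_iff.1 h).trans (iso_iff.1 h'))

lemma iso_orth {q q' r r' : QF F} (h : QF.Isometric q r) (h' : QF.Isometric q' r') :
    QF.Isometric (q.orthSum q') (r.orthSum r') := by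
  rw [iso_iff] at *
  exact ((orth_equiv _ _).trans (h.prod h')).trans (orth_equiv _ _).symm

lemma prod_assoc_equiv {V V' V'' : Type*} [AddCommGroup V] [Module F V] [AddCommGroup V']
    [Module F V'] [AddCommGroup V''] [Module F V''] (Q : QuadraticForm F V)
    (Q' : QuadraticForm F V') (Q'' : QuadraticForm F V'') :
    ((Q.prod Q').prod Q'').Equivalent (Q.prod (Q'.prod Q'')) :=
  ⟨⟨LinearEquiv.prodAssoc F V V' V'', fun x => by simp [add_assoc]⟩⟩

lemma prod_comm_equiv {V V' : Type*} [AddCommGroup V] [Module F V] [AddCommGroup V']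
    [Module F V'] (Q : QuadraticForm F V) (Q' : QuadraticForm F V') :
    (Q.prod Q').Equivalent (Q'.prod Q) :=
  ⟨QuadraticMap.IsometryEquiv.prodComm _ _⟩

lemma iso_comm (q q' : QF F) : QF.Isometric (q.orthSum q') (q'.orthSum q) := by
  rw [iso_iff]
  exact ((orth_equiv _ _).trans (prod_comm_equiv _ _)).trans (orth_equiv _ _).symm

lemma iso_assoc (q q' q'' : QF F) :
    QF.Isometric ((q.orthSum q').orthSum q'') (q.orthSum (q'.orthSum q'')) := by
  rw [iso_iff]
  have h1 := orth_equiv (q.orthSum q') q''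
  have h2 := (orth_equiv q q').prod (QuadraticMap.Equivalent.refl (toQ q''))
  have h3 := prod_assoc_equiv (toQ q) (toQ q') (toQ q'')
  have h4 := (QuadraticMap.Equivalent.refl (toQ q)).prod (orth_equiv q' q'').symm
  have h5 := (orth_equiv q (q'.orthSum q'')).symm
  exact h1.trans (h2.trans (h3.trans (h4.trans h5)))

lemma eval_nil (x : Fin (QF.nil : QF F).dim → F) : (QF.nil : QF F).eval x = 0 :=
  Finset.sum_eq_zero fun i _ => Fin.elim0 i

lemma iso_nil (q : QF F) : QF.Isometric (QF.nil.orthSum q) q := by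
  rw [iso_iff]
  refine (orth_equiv _ _).trans ⟨⟨⟨⟨⟨Prod.snd, ?_⟩, ?_⟩, fun x => (0, x), ?_, ?_⟩, ?_⟩⟩
  · intro x y; rfl
  · intro c x; rfl
  · rintro ⟨x, y⟩
    ext i
    · exact Fin.elim0 i
    · rfl
  · intro x; rfl
  · rintro ⟨x, y⟩
    have h1 := eval_nil x
    rw [← toQ_apply] at h1
    rw [prod_apply]
    dsimp only
    rw [h1, zero_add]

lemma iso_nil' (q : QF F) : QF.Isometric (q.orthSum QF.nil) q :=
  iso_trans (iso_comm _ _) (iso_nil q)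

lemma ns_orth {q q' : QF F} (h : q.Nonsingular) (h' : q'.Nonsingular) :
    (q.orthSum q').Nonsingular := by
  rw [ns_iff] at *
  exact NS.equiv (orth_equiv _ _).symm (h.prod h')

lemma ns_nil : (QF.nil : QF F).Nonsingular := by
  intro x _
  ext i
  exact Fin.elim0 i

lemma ns_smul {t : F} (ht : t ≠ 0) {q : QF F} (h : q.Nonsingular) : (q.smul t).Nonsingular := by
  intro (x : Fin q.dim → F) hx
  change x = 0
  apply h
  have hx : (t • q.c + (t • q.c).transpose).mulVec x = 0 := hx
  rw [Matrix.transpose_smul, ← smul_add, Matrix.smul_mulVec] at hx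
  exact (smul_eq_zero.1 hx).resolve_left ht

lemma ns_sumList (l : List (QF F)) (h : ∀ q ∈ l, q.Nonsingular) : (QF.sumList l).Nonsingular := by
  induction l with
  | nil => exact ns_nil
  | cons q l ih =>
    exact ns_orth (h q (by simp)) (ih fun r hr => h r (by simp [hr]))

lemma bin_eval (a b : F) (x : Fin 2 → F) :
    (QF.bin a b).eval x = a * x 0 ^ 2 + x 0 * x 1 + b * x 1 ^ 2 := by
  unfold QF.eval QF.bin
  simp [Fin.sum_univ_two]
  ring

/-- The binary form `ax² + xy + by²` on `F × F`. -/
noncomputable def binQ (a b : F) : QuadraticForm F (F × F) :=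
  a • linMulLin (LinearMap.fst F F F) (LinearMap.fst F F F)
    + linMulLin (LinearMap.fst F F F) (LinearMap.snd F F F)
    + b • linMulLin (LinearMap.snd F F F) (LinearMap.snd F F F)

@[simp] lemma binQ_apply (a b : F) (x : F × F) :
    binQ a b x = a * x.1 ^ 2 + x.1 * x.2 + b * x.2 ^ 2 := by
  simp [binQ, pow_two]

@[simp] lemma binQ_polar [CharP F 2] (a b : F) (x y : F × F) :
    polar (binQ a b) x y = x.1 * y.2 + x.2 * y.1 := by
  simp only [polar, binQ_apply, Prod.fst_add, Prod.snd_add]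
  linear_combination (a * x.1 * y.1 + b * x.2 * y.2) * (CharTwo.two_eq_zero : (2 : F) = 0)

lemma bin_equiv (a b : F) : (toQ (QF.bin a b)).Equivalent (binQ a b) := by
  refine ⟨⟨LinearEquiv.finTwoArrow F F, fun x => ?_⟩⟩
  rw [toQ_apply]
  exact (binQ_apply a b _).trans (bin_eval a b x).symm

lemma ns_binQ [CharP F 2] (a b : F) : NS (binQ a b) := by
  intro x hx
  have h0 := hx (1, 0)
  have h1 := hx (0, 1)
  simp at h0 h1
  exact Prod.ext h1 h0

lemma ns_bin [CharP F 2] (a b : F) : (QF.bin a b).Nonsingular := by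
  rw [ns_iff]
  exact NS.equiv (bin_equiv a b).symm (ns_binQ a b)

lemma met_nil : Met (toQ (QF.nil : QF F)) := by
  refine ⟨⊤, fun x _ => ?_, fun _ _ => trivial⟩
  rw [toQ_apply, eval_nil]

lemma met_sumList (l : List (QF F)) (h : ∀ q ∈ l, Met (toQ q)) : Met (toQ (QF.sumList l)) := by
  induction l with
  | nil => exact met_nil
  | cons q l ih =>
    exact Met.equiv (orth_equiv _ _).symm
      ((h q (by simp)).prod (ih fun r hr => h r (by simp [hr])))

lemma met_hypPlane [CharP F 2] : Met (toQ (QF.hypPlane : QF F)) := by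
  refine Met.equiv (bin_equiv 0 0).symm ⟨LinearMap.ker (LinearMap.snd F F F), ?_, ?_⟩
  · intro x hx
    have hx : x.2 = 0 := hx
    simp [hx]
  · intro x hx
    have h0 := hx (1, 0) (by simp)
    simpa using h0

lemma met_hyp [CharP F 2] (n : ℕ) : Met (toQ (QF.hyp n : QF F)) :=
  met_sumList _ fun q hq => by
    rw [List.eq_of_mem_replicate hq]
    exact met_hypPlane

lemma ns_hyp [CharP F 2] (n : ℕ) : (QF.hyp n : QF F).Nonsingular :=
  ns_sumList _ fun q hq => by
    rw [List.eq_of_mem_replicate hq]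
    exact ns_bin _ _

/-- coordinates for a family of binary forms -/
def consSplit (F : Type*) [Field F] (n : ℕ) : ((Fin (n + 1) → F) × (Fin (n + 1) → F)) ≃ₗ[F]
    (Fin 2 → F) × ((Fin n → F) × (Fin n → F)) where
  toFun p := (![p.1 0, p.2 0], (Fin.tail p.1, Fin.tail p.2))
  invFun r := (Fin.cons (r.1 0) r.2.1, Fin.cons (r.1 1) r.2.2)
  map_add' p p' := by
    refine Prod.ext ?_ rfl
    funext i
    fin_cases i <;> rfl
  map_smul' c p := by
    refine Prod.ext ?_ rfl
    funext i
    fin_cases i <;> rfl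
  left_inv p := by
    simp
  right_inv r := by
    refine Prod.ext ?_ ?_
    · funext i
      fin_cases i <;> rfl
    · simp

lemma famEquiv (n : ℕ) (a b : Fin n → F) :
    ∃ e : ((Fin n → F) × (Fin n → F)) ≃ₗ[F]
        (Fin (QF.sumList (List.ofFn fun i => QF.bin (a i) (b i))).dim → F),
      ∀ x y, (QF.sumList (List.ofFn fun i => QF.bin (a i) (b i))).eval (e (x, y))
        = ∑ i, (a i * x i ^ 2 + x i * y i + b i * y i ^ 2) := by
  induction n with
  | zero =>
    refine ⟨⟨⟨⟨fun _ => 0, ?_⟩, ?_⟩, fun _ => 0, ?_, ?_⟩, ?_⟩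
    · intro x y; simp
    · intro c x; simp
    · rintro ⟨x, y⟩
      ext i <;> exact Fin.elim0 i
    · intro x
      ext i
      exact Fin.elim0 i
    · intro x y
      exact (eval_nil _).trans (by simp)
  | succ n ih =>
    obtain ⟨e, he⟩ := ih (fun i => a i.succ) (fun i => b i.succ)
    rw [List.ofFn_succ]
    refine ⟨((consSplit F n).trans ((LinearEquiv.refl F (Fin 2 → F)).prodCongr e)).trans
      (splitEquiv F 2 _).symm, fun x y => ?_⟩
    have h := orthSum_eval (QF.bin (a 0) (b 0))
      (QF.sumList (List.ofFn fun i : Fin n => QF.bin (a i.succ) (b i.succ)))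
      ((splitEquiv F 2 _).symm (![x 0, y 0], e (Fin.tail x, Fin.tail y)))
    refine h.trans ?_
    erw [LinearEquiv.apply_symm_apply]
    rw [Fin.sum_univ_succ]
    congr 1
    · erw [bin_eval]
      rfl
    · exact he _ _

lemma exists_fam [CharP F 2] (q : QF F) (hq : q.Nonsingular) :
    ∃ (n : ℕ) (a b : Fin n → F),
      QF.Isometric (QF.sumList (List.ofFn fun i => QF.bin (a i) (b i))) q := by
  rw [ns_iff] at hq
  obtain ⟨L, h1, h2⟩ := exists_polarLagrangian (toQ q)
  obtain ⟨n, a, b, e, he, -⟩ := normalForm _ hq L h1 h2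
  obtain ⟨e', he'⟩ := famEquiv n a b
  refine ⟨n, a, b, e'.symm.trans e, fun x => ?_⟩
  obtain ⟨⟨u, v⟩, rfl⟩ := e'.surjective x
  rw [he', ← he, ← toQ_apply]
  simp

lemma hyperbolic_of_met [CharP F 2] (q : QF F) (hq : q.Nonsingular) (hm : Met (toQ q)) :
    q.Hyperbolic := by
  rw [ns_iff] at hq
  obtain ⟨L, h1, h2⟩ := hm
  obtain ⟨n, a, b, e, he, h0⟩ := normalForm _ hq L
    (fun x hx y hy => by simp [polar, h1 _ hx, h1 _ hy, h1 _ (L.add_mem hx hy)]) h2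
  obtain ⟨rfl, rfl⟩ := h0 h1
  obtain ⟨e', he'⟩ := famEquiv n (0 : Fin n → F) 0
  have : (QF.hyp n : QF F) = QF.sumList (List.ofFn fun i : Fin n =>
      QF.bin ((0 : Fin n → F) i) ((0 : Fin n → F) i)) := by
    simp [QF.hyp, QF.hypPlane, List.ofFn_const]
  refine ⟨n, ?_⟩
  rw [this]
  apply iso_symm
  refine ⟨e'.symm.trans e, fun x => ?_⟩
  obtain ⟨⟨u, v⟩, rfl⟩ := e'.surjective x
  rw [he', ← he, ← toQ_apply]
  simp

lemma met_of_hyperbolic [CharP F 2] (q : QF F) (h : q.Hyperbolic) : Met (toQ q) := by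
  obtain ⟨n, hn⟩ := h
  exact Met.equiv (iso_iff.1 hn).symm (met_hyp n)

end bridge

section basechange
variable {F K : Type*} [Field F] [Field K]

lemma eval_dot (q : QF F) (x : Fin q.dim → F) : q.eval x = x ⬝ᵥ (q.c.mulVec x) := by
  unfold QF.eval dotProduct Matrix.mulVec dotProduct
  refine Finset.sum_congr rfl fun i _ => ?_
  rw [Finset.mul_sum]
  refine Finset.sum_congr rfl fun j _ => ?_
  ring

lemma quad_expand {n : ℕ} (A : Matrix (Fin n) (Fin n) F) (x : Fin n → F) :
    x ⬝ᵥ (A.mulVec x) = ∑ p : Fin n × Fin n, A p.1 p.2 * x p.1 * x p.2 := by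
  rw [Fintype.sum_prod_type]
  exact (eval_dot ⟨n, A⟩ x).symm

lemma alt_map (f : F →+* K) {n : ℕ} (A : Matrix (Fin n) (Fin n) F)
    (h : ∀ x, x ⬝ᵥ (A.mulVec x) = 0) (x : Fin n → K) : x ⬝ᵥ ((A.map f).mulVec x) = 0 := by
  have hd : ∀ i, A i i = 0 := fun i => by
    have := h (Pi.single i 1)
    simpa using this
  have ho : ∀ i j, A i j + A j i = 0 := fun i j => by
    have := h (Pi.single i 1 + Pi.single j 1)
    simp [Matrix.mulVec_add, add_dotProduct, hd] at this
    linear_combination this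
  rw [quad_expand]
  refine Finset.sum_involution (fun p _ => (p.2, p.1)) ?_ ?_ ?_ ?_
  · intro p _
    have := congrArg f (ho p.1 p.2)
    simp only [map_add, map_zero] at this
    simp only [Matrix.map_apply]
    linear_combination (x p.1 * x p.2) * this
  · rintro ⟨i, j⟩ _ hne heq
    simp only [Prod.mk.injEq] at heq
    obtain rfl := heq.1
    simp [hd] at hne
  · simp
  · simp

lemma iso_map (f : F →+* K) {q q' : QF F} (h : QF.Isometric q q') :
    QF.Isometric (q.map f) (q'.map f) := by
  obtain ⟨e, he⟩ := h
  let M := LinearMap.toMatrix' (e : (Fin q.dim → F) →ₗ[F] (Fin q'.dim → F))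
  let N := LinearMap.toMatrix' (e.symm : (Fin q'.dim → F) →ₗ[F] (Fin q.dim → F))
  have hM : ∀ x, e x = M.mulVec x := fun x => by
    simp [M, ← Matrix.toLin'_apply]
  have hMN : M * N = 1 := by
    simp only [M, N]
    rw [← LinearMap.toMatrix'_comp]; simp
  have hNM : N * M = 1 := by
    simp only [M, N]
    rw [← LinearMap.toMatrix'_comp]; simp
  have hA := alt_map f (M.transpose * q'.c * M - q.c) (fun x => by
    have := he x
    rw [eval_dot, eval_dot, hM] at this
    rw [Matrix.sub_mulVec, dotProduct_sub, sub_eq_zero, ← this, ← Matrix.mulVec_mulVec,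
      ← Matrix.mulVec_mulVec, Matrix.mulVec_transpose, dotProduct_comm x, ← Matrix.dotProduct_mulVec,
      dotProduct_comm])
  have hMN' : M.map f * N.map f = 1 := by
    rw [← Matrix.map_mul, hMN]; simp
  have hNM' : N.map f * M.map f = 1 := by
    rw [← Matrix.map_mul, hNM]; simp
  let e' : (Fin q.dim → K) ≃ₗ[K] (Fin q'.dim → K) :=
    LinearEquiv.ofLinearMap (Matrix.toLin' (M.map f)) (Matrix.toLin' (N.map f))
      (by rw [← Matrix.toLin'_mul, hMN']; simp) (by rw [← Matrix.toLin'_mul, hNM']; simp)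
  refine ⟨e', fun (x : Fin q.dim → K) => ?_⟩
  have := hA x
  rw [Matrix.map_sub _ (map_sub f), Matrix.map_mul, Matrix.map_mul, Matrix.sub_mulVec, dotProduct_sub, sub_eq_zero, ← Matrix.mulVec_mulVec,
      ← Matrix.mulVec_mulVec, Matrix.transpose_map, Matrix.mulVec_transpose, dotProduct_comm x, ← Matrix.dotProduct_mulVec,
      dotProduct_comm] at this
  exact ((eval_dot (q'.map f) _).trans this).trans (eval_dot (q.map f) x).symm

lemma map_orth (f : F →+* K) (q q' : QF F) :
    (q.orthSum q').map f = (q.map f).orthSum (q'.map f) := by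
  unfold QF.map QF.orthSum
  congr 1
  ext i j
  refine Fin.addCases (fun i => ?_) (fun i => ?_) i <;>
  refine Fin.addCases (fun j => ?_) (fun j => ?_) j <;> simp <;> rfl

lemma map_nil (f : F →+* K) : (QF.nil : QF F).map f = QF.nil := by
  unfold QF.map QF.nil
  congr 1
  ext i j
  exact Fin.elim0 i

lemma map_sumList (f : F →+* K) (l : List (QF F)) :
    (QF.sumList l).map f = QF.sumList (l.map (QF.map f)) := by
  induction l with
  | nil => exact map_nil f
  | cons q l ih =>
    refine (map_orth f q (QF.sumList l)).trans ?_
    rw [ih]; rfl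

lemma map_bin (f : F →+* K) (a b : F) : (QF.bin a b).map f = QF.bin (f a) (f b) := by
  unfold QF.map QF.bin
  congr 1
  ext i j
  fin_cases i <;> fin_cases j <;> simp

lemma map_hyp (f : F →+* K) (n : ℕ) : (QF.hyp n : QF F).map f = QF.hyp n := by
  unfold QF.hyp
  rw [map_sumList, List.map_replicate]
  congr 2
  unfold QF.hypPlane
  rw [map_bin]; simp

lemma map_zeros (f : F →+* K) (n : ℕ) : (QF.zeros n : QF F).map f = QF.zeros n := by
  unfold QF.map QF.zeros QF.diag
  congr 1
  ext i j
  simp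

lemma map_smul' (f : F →+* K) (t : F) (q : QF F) : (q.smul t).map f = (q.map f).smul (f t) := by
  unfold QF.map QF.smul
  congr 1
  ext i j
  simp
  rfl

lemma toQ_zeros (n : ℕ) : toQ (QF.zeros n : QF F) = 0 := by
  ext x
  rw [toQ_apply, eval_dot]
  have h : (QF.zeros n : QF F).c = 0 := by
    unfold QF.zeros QF.diag
    simp
  rw [h, Matrix.zero_mulVec, dotProduct_zero]
  rfl

lemma iso_ns {q q' : QF F} (h : QF.Isometric q q') (hq : q.Nonsingular) : q'.Nonsingular := by
  rw [ns_iff] at *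
  exact hq.equiv (iso_iff.1 h)

lemma ns_map [CharP F 2] [CharP K 2] (f : F →+* K) {q : QF F} (hq : q.Nonsingular) :
    (q.map f).Nonsingular := by
  obtain ⟨n, a, b, h⟩ := exists_fam q hq
  refine iso_ns (iso_map f h) ?_
  rw [map_sumList]
  refine ns_sumList _ fun r hr => ?_
  simp only [List.mem_map, List.mem_ofFn] at hr
  obtain ⟨_, ⟨i, rfl⟩, rfl⟩ := hr
  rw [map_bin]
  exact ns_bin _ _

/-- multiplying by a square -/
lemma iso_sq_smul (q : QF F) (x : F) (hx : x ≠ 0) : QF.Isometric (q.smul (x ^ 2)) q := by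
  refine ⟨(LinearEquiv.smulOfNeZero F (Fin q.dim → F) x hx), fun (y : Fin q.dim → F) => ?_⟩
  unfold QF.eval QF.smul
  refine Finset.sum_congr rfl fun i _ => Finset.sum_congr rfl fun j _ => ?_
  change q.c i j * (x * y i) * (x * y j) = (x ^ 2 * q.c i j) * y i * y j
  ring

lemma met_of_wittEquiv [CharP F 2] {q q' : QF F} (h : QF.WittEquiv q q') (h' : Met (toQ q')) :
    Met (toQ q) := by
  obtain ⟨k, k', l, l', h⟩ := h
  have h1 : Met (toQ (q'.orthSum ((QF.hyp k').orthSum (QF.zeros l')))) := by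
    refine Met.equiv (orth_equiv _ _).symm (h'.prod (Met.equiv (orth_equiv _ _).symm
      ((met_hyp k').prod ?_)))
    rw [toQ_zeros]; exact Met.zero
  have h2 := Met.equiv (iso_iff.1 (iso_trans (iso_assoc _ _ _) h)).symm h1
  have h3 := Met.equiv (orth_equiv _ _) h2
  rw [toQ_zeros] at h3
  have h4 := Met.equiv (orth_equiv _ _) h3.strip
  exact h4.cancel (met_hyp k) ((ns_iff _).1 (ns_hyp k))

lemma wittEquiv_map (f : F →+* K) {q q' : QF F} (h : QF.WittEquiv q q') :
    QF.WittEquiv (q.map f) (q'.map f) := by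
  obtain ⟨k, k', l, l', h⟩ := h
  refine ⟨k, k', l, l', ?_⟩
  have := iso_map f h
  simpa only [map_orth, map_hyp, map_zeros] using this

theorem backward [Algebra F K] [CharP F 2] [CharP K 2] (T : Set F) (h0 : ∀ t ∈ T, t ≠ 0)
    (hroot : ∀ t ∈ T, ∃ x : K, x ^ 2 = algebraMap F K t) (q : QF F) (hq : q.Nonsingular)
    (l : List (F × QF F)) (hl : ∀ p ∈ l, p.1 ∈ T ∧ p.2.Nonsingular)
    (hw : QF.WittEquiv q (QF.sumList (l.map fun p => p.2.orthSum (QF.smul p.1 p.2)))) :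
    QF.Hyperbolic (q.map (algebraMap F K)) := by
  refine hyperbolic_of_met _ (ns_map _ hq) (met_of_wittEquiv (wittEquiv_map _ hw) ?_)
  rw [map_sumList]
  refine met_sumList _ fun r hr => ?_
  simp only [List.mem_map, exists_exists_and_eq_and] at hr
  obtain ⟨p, hp, rfl⟩ := hr
  obtain ⟨ht, hns⟩ := hl p hp
  obtain ⟨x, hx⟩ := hroot _ ht
  have hx0 : x ≠ 0 := by
    rintro rfl
    apply h0 _ ht
    apply (algebraMap F K).injective
    rw [← hx]; simp
  rw [map_orth, map_smul', ← hx]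
  refine Met.equiv (orth_equiv _ _).symm ?_
  have h5 := Met.self ((ns_iff _).1 (ns_map (algebraMap F K) hns))
  exact Met.equiv ((QuadraticMap.Equivalent.refl _).prod
    (iso_iff.1 (iso_symm (iso_sq_smul _ x hx0)))) h5

end basechange

section wittgroup
variable {F : Type*} [Field F]

lemma met_iso {q q' : QF F} (h : QF.Isometric q q') (hm : Met (toQ q)) : Met (toQ q') :=
  Met.equiv (iso_iff.1 h) hm

lemma met_orth {q q' : QF F} (h : Met (toQ q)) (h' : Met (toQ q')) : Met (toQ (q.orthSum q')) :=
  Met.equiv (orth_equiv _ _).symm (h.prod h')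

lemma met_cancel {q r : QF F} (h : Met (toQ (q.orthSum r))) (hr : Met (toQ r))
    (hn : r.Nonsingular) : Met (toQ q) :=
  (Met.equiv (orth_equiv _ _) h).cancel hr ((ns_iff _).1 hn)

lemma met_self [CharP F 2] {q : QF F} (hn : q.Nonsingular) : Met (toQ (q.orthSum q)) :=
  Met.equiv (orth_equiv _ _).symm (Met.self ((ns_iff _).1 hn))

lemma iso_four (a b c d : QF F) :
    QF.Isometric ((a.orthSum b).orthSum (c.orthSum d)) ((a.orthSum c).orthSum (b.orthSum d)) := by
  refine iso_trans (iso_assoc _ _ _) (iso_trans (iso_orth (iso_refl a) ?_)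
    (iso_symm (iso_assoc _ _ _)))
  exact iso_trans (iso_symm (iso_assoc _ _ _)) (iso_trans (iso_orth (iso_comm _ _) (iso_refl _))
    (iso_assoc _ _ _))

variable (F) in
/-- Nonsingular forms up to Witt equivalence. -/
def wsetoid [CharP F 2] : Setoid {q : QF F // q.Nonsingular} where
  r q q' := Met (toQ (q.1.orthSum q'.1))
  iseqv := by
    refine ⟨fun q => met_self q.2, fun h => met_iso (iso_comm _ _) h, ?_⟩
    intro q q' q'' h h'
    have h1 := met_orth h (met_iso (iso_comm _ _) h')
    have h2 := met_iso (iso_four _ _ _ _) h1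
    exact met_cancel h2 (met_self q'.2) (ns_orth q'.2 q'.2)

variable (F) in
/-- The Witt group of nonsingular quadratic forms. -/
def WG [CharP F 2] : Type _ := Quotient (wsetoid F)

variable [CharP F 2]

/-- class of a nonsingular form -/
def clsN (q : {q : QF F // q.Nonsingular}) : WG F := Quotient.mk (wsetoid F) q

lemma clsN_eq {q q' : {q : QF F // q.Nonsingular}} :
    clsN q = clsN q' ↔ Met (toQ (q.1.orthSum q'.1)) :=
  Quotient.eq (r := wsetoid F)

lemma clsN_iso {q q' : {q : QF F // q.Nonsingular}} (h : QF.Isometric q.1 q'.1) :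
    clsN q = clsN q' :=
  clsN_eq.2 (met_iso (iso_orth (iso_refl _) h) (met_self q.2))

/-- addition in the Witt group -/
def wadd : WG F → WG F → WG F :=
  Quotient.map₂ (sa := wsetoid F) (sb := wsetoid F) (sc := wsetoid F)
    (fun q q' => ⟨q.1.orthSum q'.1, ns_orth q.2 q'.2⟩)
    (fun _ _ h _ _ h' => met_iso (iso_four _ _ _ _) (met_orth h h'))

lemma clsN_ind {p : WG F → Prop} (h : ∀ q, p (clsN q)) (w : WG F) : p w :=
  Quotient.ind (s := wsetoid F) h w

instance : Add (WG F) := ⟨wadd⟩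
instance : Zero (WG F) := ⟨clsN ⟨QF.nil, ns_nil⟩⟩
instance : Neg (WG F) := ⟨fun w => w⟩

instance : AddCommGroup (WG F) where
  nsmul := nsmulRec
  zsmul := zsmulRec
  add_assoc a b c := by
    induction a using clsN_ind with | h q => ?_
    induction b using clsN_ind with | h q' => ?_
    induction c using clsN_ind with | h q'' => ?_
    exact clsN_iso (iso_assoc _ _ _)
  add_comm a b := by
    induction a using clsN_ind with | h q => ?_
    induction b using clsN_ind with | h q' => ?_
    exact clsN_iso (iso_comm _ _)
  zero_add a := by
    induction a using clsN_ind with | h q => ?_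
    exact clsN_iso (iso_nil _)
  add_zero a := by
    induction a using clsN_ind with | h q => ?_
    exact clsN_iso (iso_nil' _)
  neg_add_cancel a := by
    induction a using clsN_ind with | h q => ?_
    exact clsN_eq.2 (met_iso (iso_symm (iso_nil' _)) (met_self q.2))

open Classical in
/-- class of a form -/
noncomputable def cls (q : QF F) : WG F := if h : q.Nonsingular then clsN ⟨q, h⟩ else 0

lemma cls_of {q : QF F} (h : q.Nonsingular) : cls q = clsN ⟨q, h⟩ := dif_pos h

lemma cls_orth {q q' : QF F} (h : q.Nonsingular) (h' : q'.Nonsingular) :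
    cls (q.orthSum q') = cls q + cls q' := by
  rw [cls_of h, cls_of h', cls_of (ns_orth h h')]
  rfl

lemma cls_nil : cls (QF.nil : QF F) = 0 := by
  rw [cls_of ns_nil]
  rfl

lemma cls_iso {q q' : QF F} (h : q.Nonsingular) (hi : QF.Isometric q q') : cls q = cls q' := by
  rw [cls_of h, cls_of (iso_ns hi h)]
  exact clsN_iso hi

lemma cls_eq_zero {q : QF F} (h : q.Nonsingular) : cls q = 0 ↔ Met (toQ q) := by
  rw [cls_of h]
  refine (clsN_eq (q' := ⟨QF.nil, ns_nil⟩)).trans ?_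
  exact ⟨met_iso (iso_nil' _), met_iso (iso_symm (iso_nil' _))⟩

lemma cls_sumList (l : List (QF F)) (h : ∀ q ∈ l, q.Nonsingular) :
    cls (QF.sumList l) = (l.map cls).sum := by
  induction l with
  | nil => exact cls_nil
  | cons q l ih =>
    have h1 : ∀ r ∈ l, r.Nonsingular := fun r hr => h r (by simp [hr])
    have h2 := cls_orth (h q (by simp)) (ns_sumList l h1)
    rw [List.map_cons, List.sum_cons, ← ih h1]
    exact h2

lemma w_neg (w : WG F) : -w = w := rfl

/-- Subgroup generated by the `⟨1,t⟩ ⊗ p` -/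
def ST (T : Set F) : AddSubgroup (WG F) :=
  AddSubgroup.closure {w | ∃ t ∈ T, ∃ p : QF F, p.Nonsingular ∧ w = cls (p.orthSum (p.smul t))}

lemma ST_list (T : Set F) (h0 : ∀ t ∈ T, t ≠ 0) (w : WG F) (hw : w ∈ ST T) :
    ∃ l : List (F × QF F), (∀ p ∈ l, p.1 ∈ T ∧ p.2.Nonsingular) ∧
      w = cls (QF.sumList (l.map fun p => p.2.orthSum (QF.smul p.1 p.2))) := by
  have key : ∀ l : List (F × QF F), (∀ p ∈ l, p.1 ∈ T ∧ p.2.Nonsingular) →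
      ∀ q ∈ (l.map fun p => p.2.orthSum (QF.smul p.1 p.2)), q.Nonsingular := by
    intro l hl q hq
    simp only [List.mem_map] at hq
    obtain ⟨p, hp, rfl⟩ := hq
    exact ns_orth (hl p hp).2 (ns_smul (h0 _ (hl p hp).1) (hl p hp).2)
  induction hw using AddSubgroup.closure_induction with
  | mem x hx =>
    obtain ⟨t, ht, p, hp, rfl⟩ := hx
    have hl : ∀ r ∈ [(t, p)], r.1 ∈ T ∧ r.2.Nonsingular := by simp [ht, hp]
    refine ⟨[(t, p)], hl, ?_⟩
    rw [cls_sumList _ (key _ hl)]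
    simp
  | zero => exact ⟨[], by simp, cls_nil.symm⟩
  | add x y _ _ hx hy =>
    obtain ⟨l, h1, rfl⟩ := hx
    obtain ⟨l', h1', rfl⟩ := hy
    have hl : ∀ r ∈ l ++ l', r.1 ∈ T ∧ r.2.Nonsingular := by
      intro r hr
      rcases List.mem_append.1 hr with h | h
      · exact h1 r h
      · exact h1' r h
    refine ⟨l ++ l', hl, ?_⟩
    rw [cls_sumList _ (key _ hl), cls_sumList _ (key _ h1), cls_sumList _ (key _ h1')]
    simp
  | neg x _ hx =>
    rw [w_neg]; exact hx

lemma iso_zeros (q : QF F) : QF.Isometric (q.orthSum (QF.zeros 0)) q := by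
  have : (QF.zeros 0 : QF F) = QF.nil := by
    unfold QF.zeros QF.nil QF.diag
    congr 1
    ext i j
    exact Fin.elim0 i
  rw [this]
  exact iso_nil' q

lemma wittEquiv_of_cls {q s : QF F} (hq : q.Nonsingular) (hs : s.Nonsingular)
    (h : cls q = cls s) : QF.WittEquiv q s := by
  have h1 : Met (toQ (q.orthSum s)) := by
    rw [cls_of hq, cls_of hs, clsN_eq] at h
    exact h
  obtain ⟨k, hk⟩ := hyperbolic_of_met _ (ns_orth hq hs) h1
  obtain ⟨k', hk'⟩ := hyperbolic_of_met _ (ns_orth hs hs) (met_self hs)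
  refine ⟨k', k, 0, 0, ?_⟩
  refine iso_trans (iso_orth (iso_refl q) (iso_trans (iso_zeros _) (iso_symm hk'))) ?_
  refine iso_trans ?_ (iso_orth (iso_refl s) (iso_symm (iso_trans (iso_zeros _) (iso_symm hk))))
  exact iso_trans (iso_symm (iso_assoc _ _ _)) (iso_comm _ _)

theorem exists_list_of_mem (T : Set F) (h0 : ∀ t ∈ T, t ≠ 0) (q : QF F) (hq : q.Nonsingular)
    (h : cls q ∈ ST T) : ∃ l : List (F × QF F), (∀ p ∈ l, p.1 ∈ T ∧ p.2.Nonsingular) ∧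
      QF.WittEquiv q (QF.sumList (l.map fun p => p.2.orthSum (QF.smul p.1 p.2))) := by
  obtain ⟨l, hl, hw⟩ := ST_list T h0 _ h
  refine ⟨l, hl, wittEquiv_of_cls hq (ns_sumList _ ?_) hw⟩
  intro q hq
  simp only [List.mem_map] at hq
  obtain ⟨p, hp, rfl⟩ := hq
  exact ns_orth (hl p hp).2 (ns_smul (h0 _ (hl p hp).1) (hl p hp).2)

lemma two_zero : (2 : F) = 0 := CharTwo.two_eq_zero

lemma add_zero_iff {x y : F} : x + y = 0 ↔ x = y := CharTwo.add_eq_zero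

lemma cls_bin_two {a b c d : F} (h : Met ((binQ a b).prod (binQ c d))) :
    cls (QF.bin a b) = cls (QF.bin c d) := by
  rw [cls_of (ns_bin a b), cls_of (ns_bin c d), clsN_eq]
  exact Met.equiv (((bin_equiv a b).prod (bin_equiv c d)).symm.trans (orth_equiv _ _).symm) h

lemma cls_bin_add (a a' b : F) :
    cls (QF.bin (a + a') b) = cls (QF.bin a b) + cls (QF.bin a' b) := by
  rw [← cls_orth (ns_bin _ _) (ns_bin _ _), cls_of (ns_bin _ _),
    cls_of (ns_orth (ns_bin _ _) (ns_bin _ _)), clsN_eq]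
  refine Met.equiv (orth_equiv _ _).symm ?_
  refine Met.equiv ((bin_equiv _ _).symm.prod
    (((bin_equiv _ _).prod (bin_equiv _ _)).symm.trans (orth_equiv _ _).symm)) ?_
  let L : Submodule F ((F × F) × ((F × F) × (F × F))) :=
    { carrier := {v | v.1.1 = v.2.1.1 ∧ v.1.1 = v.2.2.1 ∧ v.1.2 = v.2.1.2 + v.2.2.2}
      add_mem' := by
        rintro v w ⟨h1, h2, h3⟩ ⟨h1', h2', h3'⟩
        refine ⟨?_, ?_, ?_⟩ <;> simp only [Prod.fst_add, Prod.snd_add]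
        · rw [h1, h1']
        · rw [h2, h2']
        · rw [h3, h3']; ring
      zero_mem' := by simp
      smul_mem' := by
        rintro c v ⟨h1, h2, h3⟩
        refine ⟨?_, ?_, ?_⟩ <;> simp only [Prod.smul_fst, Prod.smul_snd, smul_eq_mul]
        · rw [h1]
        · rw [h2]
        · rw [h3]; ring }
  refine ⟨L, ?_, ?_⟩
  · rintro ⟨⟨x, y⟩, ⟨x1, y1⟩, ⟨x2, y2⟩⟩ ⟨h1, h2, h3⟩
    simp only at h1 h2 h3
    subst h1 h2 h3
    simp
    linear_combination (a * x ^ 2 + a' * x ^ 2 + x * y1 + x * y2 + b * y1 ^ 2 + b * y2 ^ 2 + b * y1 * y2) * (two_zero (F := F))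
  · rintro ⟨⟨x, y⟩, ⟨x1, y1⟩, ⟨x2, y2⟩⟩ h
    have e1 := h ((1, 0), (1, 0), (1, 0)) ⟨rfl, rfl, by simp⟩
    have e2 := h ((0, 1), (0, 1), (0, 0)) ⟨rfl, rfl, by simp⟩
    have e3 := h ((0, 1), (0, 0), (0, 1)) ⟨rfl, rfl, by simp⟩
    simp [add_zero_iff] at e1 e2 e3
    exact ⟨e2, e3, e1⟩

lemma cls_bin_comm (a b : F) : cls (QF.bin a b) = cls (QF.bin b a) := by
  apply cls_bin_two
  let L : Submodule F ((F × F) × (F × F)) :=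
    { carrier := {v | v.1.1 = v.2.2 ∧ v.1.2 = v.2.1}
      add_mem' := by
        rintro v w ⟨h1, h2⟩ ⟨h1', h2'⟩
        refine ⟨?_, ?_⟩ <;> simp only [Prod.fst_add, Prod.snd_add]
        · rw [h1, h1']
        · rw [h2, h2']
      zero_mem' := by simp
      smul_mem' := by
        rintro c v ⟨h1, h2⟩
        refine ⟨?_, ?_⟩ <;> simp only [Prod.smul_fst, Prod.smul_snd, smul_eq_mul]
        · rw [h1]
        · rw [h2] }
  refine ⟨L, ?_, ?_⟩
  · rintro ⟨⟨x, y⟩, ⟨x1, y1⟩⟩ ⟨h1, h2⟩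
    simp only at h1 h2
    subst h1 h2
    simp
    linear_combination (a * x ^ 2 + x * y + b * y ^ 2) * (two_zero (F := F))
  · rintro ⟨⟨x, y⟩, ⟨x1, y1⟩⟩ h
    have e1 := h ((1, 0), (0, 1)) ⟨rfl, rfl⟩
    have e2 := h ((0, 1), (1, 0)) ⟨rfl, rfl⟩
    simp [add_zero_iff] at e1 e2
    exact ⟨e2, e1⟩

lemma cls_bin_sq (a b c : F) : cls (QF.bin (c ^ 2 * a) b) = cls (QF.bin a (c ^ 2 * b)) := by
  apply cls_bin_two
  let L : Submodule F ((F × F) × (F × F)) :=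
    { carrier := {v | v.2.1 = c * v.1.1 ∧ v.1.2 = c * v.2.2}
      add_mem' := by
        rintro v w ⟨h1, h2⟩ ⟨h1', h2'⟩
        refine ⟨?_, ?_⟩ <;> simp only [Prod.fst_add, Prod.snd_add]
        · rw [h1, h1']; ring
        · rw [h2, h2']; ring
      zero_mem' := by simp
      smul_mem' := by
        rintro c v ⟨h1, h2⟩
        refine ⟨?_, ?_⟩ <;> simp only [Prod.smul_fst, Prod.smul_snd, smul_eq_mul]
        · rw [h1]; ring
        · rw [h2]; ring }
  refine ⟨L, ?_, ?_⟩
  · rintro ⟨⟨x, y⟩, ⟨x1, y1⟩⟩ ⟨h1, h2⟩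
    simp only at h1 h2
    subst h1 h2
    simp
    linear_combination (c ^ 2 * a * x ^ 2 + c * x * y1 + c ^ 2 * b * y1 ^ 2) * (two_zero (F := F))
  · rintro ⟨⟨x, y⟩, ⟨x1, y1⟩⟩ h
    have e1 := h ((1, 0), (c, 0)) ⟨by simp, by simp⟩
    have e2 := h ((0, c), (0, 1)) ⟨by simp, by simp⟩
    simp [add_zero_iff] at e1 e2
    refine ⟨?_, ?_⟩ <;> simp only
    · rw [← e2]; ring
    · rw [e1]; ring

lemma cls_bin_wp (b c : F) : cls (QF.bin (c + c ^ 2 * b) b) = 0 := by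
  rw [cls_eq_zero (ns_bin _ _)]
  refine Met.equiv (bin_equiv _ _).symm ?_
  let L : Submodule F (F × F) :=
    { carrier := {v | v.2 = c * v.1}
      add_mem' := by
        rintro v w (h1 : _ = _) (h1' : _ = _)
        change (v + w).2 = c * (v + w).1
        rw [Prod.snd_add, Prod.fst_add, h1, h1']; ring
      zero_mem' := by simp
      smul_mem' := by
        rintro d v (h1 : _ = _)
        change (d • v).2 = c * (d • v).1
        rw [Prod.smul_fst, Prod.smul_snd, smul_eq_mul, smul_eq_mul, h1]; ring }
  refine ⟨L, ?_, ?_⟩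
  · rintro ⟨x, y⟩ (h1 : _ = _)
    simp only at h1
    subst h1
    simp
    linear_combination (c * x ^ 2 + c ^ 2 * b * x ^ 2) * (two_zero (F := F))
  · rintro ⟨x, y⟩ h
    have e1 := h (1, c) (by change c = c * 1; simp)
    simp [add_zero_iff] at e1
    change y = c * x
    rw [← e1]; ring

lemma iso_bin_t (t a b : F) (ht : t ≠ 0) :
    QF.Isometric ((QF.bin a (t * b)).smul t) (QF.bin (t * a) b) := by
  let e : (Fin 2 → F) ≃ₗ[F] (Fin 2 → F) :=
    { toFun := fun x => ![x 0, t * x 1]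
      invFun := fun x => ![x 0, t⁻¹ * x 1]
      map_add' := fun x y => by ext i; fin_cases i <;> simp [mul_add]
      map_smul' := fun c x => by ext i; fin_cases i <;> simp [mul_left_comm]
      left_inv := fun x => by ext i; fin_cases i <;> simp [ht]
      right_inv := fun x => by ext i; fin_cases i <;> simp [ht] }
  refine ⟨e, fun (x : Fin 2 → F) => ?_⟩
  refine (bin_eval _ _ (e x)).trans ?_
  have : ((QF.bin a (t * b)).smul t).eval x = t * (QF.bin a (t * b)).eval x := by
    unfold QF.eval QF.smul
    rw [Finset.mul_sum]
    refine Finset.sum_congr rfl fun i _ => ?_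
    rw [Finset.mul_sum]
    refine Finset.sum_congr rfl fun j _ => ?_
    change t * _ * _ * _ = _
    ring
  refine Eq.trans ?_ this.symm
  rw [bin_eval]
  simp [e]
  ring

/-- The symbol in the quotient -/
noncomputable def sym (T : Set F) (a b : F) : WG F ⧸ ST T := QuotientAddGroup.mk' (ST T) (cls (QF.bin a b))

lemma sym_t {T : Set F} (t : F) (ht : t ∈ T) (h0 : t ≠ 0) (a b : F) :
    sym T (t * a) b = sym T a (t * b) := by
  have hm : cls ((QF.bin a (t * b)).orthSum ((QF.bin a (t * b)).smul t)) ∈ ST T :=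
    AddSubgroup.subset_closure ⟨t, ht, _, ns_bin _ _, rfl⟩
  rw [cls_orth (ns_bin _ _) (ns_smul h0 (ns_bin _ _)),
    cls_iso (ns_smul h0 (ns_bin _ _)) (iso_bin_t t a b h0)] at hm
  unfold sym
  symm
  rw [QuotientAddGroup.mk'_apply, QuotientAddGroup.mk'_apply, QuotientAddGroup.eq, w_neg]
  exact hm

lemma sym_add (T : Set F) (a a' b : F) : sym T (a + a') b = sym T a b + sym T a' b := by
  unfold sym
  rw [cls_bin_add, map_add]

lemma sym_comm (T : Set F) (a b : F) : sym T a b = sym T b a := by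
  unfold sym
  rw [cls_bin_comm]

lemma sym_wp (T : Set F) (b c : F) : sym T (c + c ^ 2 * b) b = 0 := by
  unfold sym
  rw [cls_bin_wp, map_zero]

lemma sym_sq (T : Set F) (a b c : F) : sym T (c ^ 2 * a) b = sym T a (c ^ 2 * b) := by
  unfold sym
  rw [cls_bin_sq]

lemma sym_move {K : Type*} [Field K] [Algebra F K] [CharP K 2] (T : Set F) (h0 : ∀ t ∈ T, t ≠ 0)
    (hK : ∀ x : K, ∃ y : F, algebraMap F K y = x ^ 2)
    (hgen : Algebra.adjoin F {x : K | ∃ t ∈ T, x ^ 2 = algebraMap F K t} = ⊤)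
    (z : K) (m : F) (hm : algebraMap F K m = z ^ 2) :
    ∀ a b, sym T (m * a) b = sym T a (m * b) := by
  have hz : z ∈ Algebra.adjoin F {x : K | ∃ t ∈ T, x ^ 2 = algebraMap F K t} := by
    rw [hgen]; trivial
  have inj := (algebraMap F K).injective
  induction hz using Algebra.adjoin_induction generalizing m with
  | mem x hx =>
    obtain ⟨t, ht, hx⟩ := hx
    have : m = t := inj (by rw [hm, hx])
    subst this
    exact sym_t m ht (h0 _ ht)
  | algebraMap r =>
    have : m = r ^ 2 := inj (by rw [hm, map_pow])
    subst this
    exact fun a b => sym_sq T a b r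
  | add x y _ _ hx hy =>
    obtain ⟨mx, hmx⟩ := hK x
    obtain ⟨my, hmy⟩ := hK y
    have : m = mx + my := inj (by rw [hm, map_add, hmx, hmy, CharTwo.add_sq])
    subst this
    intro a b
    rw [add_mul, add_mul, sym_add, hx mx hmx, hy my hmy, sym_comm T a (_ + _), sym_add,
      sym_comm T a, sym_comm T a]
  | mul x y _ _ hx hy =>
    obtain ⟨mx, hmx⟩ := hK x
    obtain ⟨my, hmy⟩ := hK y
    have : m = mx * my := inj (by rw [hm, map_mul, hmx, hmy, mul_pow])
    subst this
    intro a b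
    rw [mul_assoc, hx mx hmx, hy my hmy, ← mul_assoc, mul_comm my]

end wittgroup

section calculation
variable {F K : Type*} [Field F] [Field K] [Algebra F K] [CharP F 2] [CharP K 2]

lemma sum_symm_pairs {A : Type*} [AddCommGroup A] {n : ℕ}
    (t : Fin n → Fin n → A) (h2 : ∀ i j, t i j + t i j = 0) (ht : ∀ i j, t i j = t j i) :
    ∑ i, ∑ j, t i j = ∑ i, t i i := by
  have h : ∑ p : Fin n × Fin n, (t p.1 p.2 - if p.1 = p.2 then t p.1 p.2 else 0) = 0 := by
    refine Finset.sum_involution (fun p _ => (p.2, p.1)) ?_ ?_ ?_ ?_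
    · rintro ⟨i, j⟩ _
      by_cases hij : i = j
      · subst hij; simp
      · have hji : ¬ j = i := fun h => hij h.symm
        simp only [hij, hji, if_false, sub_zero]
        rw [ht i j]; exact h2 _ _
    · rintro ⟨i, j⟩ _ hne heq
      simp only [Prod.mk.injEq] at heq
      obtain rfl := heq.1
      simp at hne
    · simp
    · simp
  rw [Finset.sum_sub_distrib, sub_eq_zero, Fintype.sum_prod_type, Fintype.sum_prod_type] at h
  rw [h]
  refine Finset.sum_congr rfl fun i _ => ?_
  simp

theorem calc_main {A : Type*} [AddCommGroup A] (s : F →+ F →+ A) (hsymm : ∀ a b, s a b = s b a)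
    (hwp : ∀ b c, s (c + c ^ 2 * b) b = 0) (sq : K →+* F)
    (hsq : ∀ z, algebraMap F K (sq z) = z ^ 2)
    (hm : ∀ z a b, s (sq z * a) b = s a (sq z * b)) (n : ℕ) (a b : Fin n → F)
    (L : Submodule K ((Fin n → K) × (Fin n → K)))
    (h1 : ∀ x y, (x, y) ∈ L → ∑ i, (algebraMap F K (a i) * x i ^ 2 + x i * y i
      + algebraMap F K (b i) * y i ^ 2) = 0)
    (h3 : ∀ x y x' y', (x, y) ∈ L → (x', y') ∈ L → x ⬝ᵥ y' + y ⬝ᵥ x' = 0)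
    (h2 : ∀ x y, (∀ x' y', (x', y') ∈ L → x ⬝ᵥ y' + y ⬝ᵥ x' = 0) → (x, y) ∈ L) :
    ∑ i, s (a i) (b i) = 0 := by
  have inj := (algebraMap F K).injective
  have htwo : ∀ x y : F, ∀ w, w = s x y → w + w = 0 := by
    rintro x y w rfl
    rw [← AddMonoidHom.add_apply, ← map_add, CharTwo.add_self_eq_zero, map_zero,
      AddMonoidHom.zero_apply]
  let β : (Fin n → K) →+ F :=
    { toFun := fun y => ∑ i, b i * sq (y i)
      map_zero' := by simp
      map_add' := fun y y' => by simp [mul_add, Finset.sum_add_distrib] }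
  have hβ : ∀ y, algebraMap F K (β y) = ∑ i, algebraMap F K (b i) * y i ^ 2 := fun y => by
    change algebraMap F K (∑ i, b i * sq (y i)) = _
    simp [hsq]
  have hβs : ∀ (c : K) y, β (c • y) = sq c * β y := fun c y => by
    change (∑ i, b i * sq ((c • y) i)) = sq c * ∑ i, b i * sq (y i)
    rw [Finset.mul_sum]
    refine Finset.sum_congr rfl fun i _ => ?_
    rw [Pi.smul_apply, smul_eq_mul, map_mul]; ring
  -- projection
  let U : Submodule K (Fin n → K) := L.map (LinearMap.fst K _ _)
  obtain ⟨g, hg⟩ := LinearMap.exists_leftInverse_of_injective U.subtype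
    (by rw [Submodule.ker_subtype])
  let P : (Fin n → K) →ₗ[K] (Fin n → K) := U.subtype ∘ₗ g
  have hPU : ∀ x, P x ∈ U := fun x => (g x).2
  have hPu : ∀ u ∈ U, P u = u := fun u hu => by
    have := LinearMap.congr_fun hg ⟨u, hu⟩
    change (g u : Fin n → K) = u
    simpa using congrArg Subtype.val this
  let row : Fin n → Fin n → K := fun j i => P (Pi.single i 1) j
  have hPx : ∀ x, P x = ∑ i, x i • P (Pi.single i 1) := fun x => by
    conv_lhs => rw [pi_eq_sum_univ' x]
    rw [map_sum]
    simp only [map_smul]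
  have hrow : ∀ j x, row j ⬝ᵥ x = P x j := fun j x => by
    rw [hPx]
    simp [dotProduct, row, mul_comm]
  have kill : ∀ φ : Fin n → K, (∀ u ∈ U, φ ⬝ᵥ u = 0) → β φ = 0 := by
    intro φ hφ
    have hmem : ((0 : Fin n → K), φ) ∈ L := h2 0 φ fun x' y' h => by
      rw [zero_dotProduct, zero_add]
      exact hφ x' ⟨(x', y'), h, rfl⟩
    have := h1 _ _ hmem
    apply inj
    rw [hβ, map_zero]
    simpa using this
  have hb : ∀ j, β (row j) = b j := by
    intro j
    have h5 := kill (Pi.single j 1 - row j) fun u hu => by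
      rw [sub_dotProduct, hrow, hPu u hu]; simp
    rw [map_sub, sub_eq_zero] at h5
    rw [← h5]
    change (∑ i, b i * sq ((Pi.single j 1 : Fin n → K) i)) = _
    rw [Finset.sum_eq_single j]
    · simp
    · intro i _ hi; simp [hi]
    · simp
  let α : Fin n → F := fun i => ∑ j, a j * sq (row j i)
  have step1 : ∑ i, s (a i) (b i) = ∑ i, s (α i) (b i) := by
    have : ∀ j, s (a j) (b j) = ∑ i, s (sq (row j i) * a j) (b i) := fun j => by
      conv_lhs => rw [← hb j]
      change s (a j) (∑ i, b i * sq (row j i)) = _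
      rw [map_sum]
      refine Finset.sum_congr rfl fun i _ => ?_
      rw [hm, mul_comm]
    simp only [this]
    rw [Finset.sum_comm]
    refine Finset.sum_congr rfl fun i _ => ?_
    simp only [α]
    rw [map_sum, AddMonoidHom.finsetSum_apply]
    refine Finset.sum_congr rfl fun j _ => ?_
    rw [mul_comm]
  have hy : ∀ i, ∃ y, (P (Pi.single i 1), y) ∈ L := fun i => by
    obtain ⟨⟨x, y⟩, h, hx⟩ := hPU (Pi.single i 1)
    exact ⟨y, by rw [← hx]; exact h⟩
  choose y hy using hy
  let N : Fin n → Fin n → K := fun i j => y i ⬝ᵥ P (Pi.single j 1)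
  have hN : ∀ i j, N i j = N j i := fun i j => by
    have := h3 _ _ _ _ (hy i) (hy j)
    rw [CharTwo.add_eq_zero, dotProduct_comm] at this
    exact this.symm
  have hyβ : ∀ i, β (y i) = ∑ j, sq (N i j) * b j := by
    intro i
    have h5 := kill (y i - ∑ j, N i j • row j) fun u hu => by
      rw [sub_dotProduct, sum_dotProduct]
      simp only [smul_dotProduct, hrow, hPu u hu]
      conv_lhs => rw [← hPu u hu]
      rw [hPx u, dotProduct_sum, sub_eq_zero]
      refine Finset.sum_congr rfl fun j _ => ?_
      rw [dotProduct_smul, ← hPx u, hPu u hu, smul_eq_mul, smul_eq_mul, mul_comm]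
    rw [map_sub, sub_eq_zero, map_sum] at h5
    simpa only [hβs, hb] using h5
  let c : Fin n → F := fun i => α i + β (y i)
  have hc : ∀ i, algebraMap F K (c i) = N i i := by
    intro i
    have h5 := h1 _ _ (hy i)
    rw [Finset.sum_add_distrib, Finset.sum_add_distrib, ← hβ] at h5
    have h6 : algebraMap F K (α i) = ∑ j, algebraMap F K (a j) * P (Pi.single i 1) j ^ 2 := by
      simp [α, hsq, row]
    rw [← h6] at h5
    have h7 : N i i = ∑ j, P (Pi.single i 1) j * y i j := by
      simp only [N]
      rw [dotProduct_comm]; rfl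
    rw [← h7] at h5
    simp only [c]
    rw [map_add]
    linear_combination h5 - N i i * (two_zero (F := K))
  have hcs : ∀ i, sq (N i i) = c i ^ 2 := fun i => inj (by rw [hsq, map_pow, hc])
  have hα : ∀ i, α i = c i + ∑ j, sq (N i j) * b j := fun i => by
    rw [← hyβ]
    simp only [c]
    linear_combination (-β (y i)) * (two_zero (F := F))
  rw [step1]
  have h8 : ∀ i, s (α i) (b i) = s (c i) (b i) + ∑ j, s (sq (N i j) * b j) (b i) := fun i => by
    rw [hα, map_add, map_sum, AddMonoidHom.add_apply, AddMonoidHom.finsetSum_apply]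
  simp only [h8]
  rw [Finset.sum_add_distrib]
  rw [sum_symm_pairs (fun i j => s (sq (N i j) * b j) (b i)) (fun i j => htwo _ _ _ rfl)
    (fun i j => by rw [hm, hsymm, hN]), ← Finset.sum_add_distrib]
  refine Finset.sum_eq_zero fun i _ => ?_
  rw [← AddMonoidHom.add_apply, ← map_add, hcs]
  exact hwp _ _

/-- The symbol as a biadditive map -/
noncomputable def symHom (T : Set F) : F →+ F →+ (WG F ⧸ ST T) :=
  AddMonoidHom.mk' (fun a => AddMonoidHom.mk' (fun b => sym T a b) fun b b' => by
    rw [sym_comm, sym_add, sym_comm T b, sym_comm T b']) fun a a' => by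
    ext b
    exact sym_add T a a' b

theorem forward (T : Set F) (h0 : ∀ t ∈ T, t ≠ 0)
    (hK : ∀ x : K, ∃ y : F, algebraMap F K y = x ^ 2)
    (hgen : Algebra.adjoin F {x : K | ∃ t ∈ T, x ^ 2 = algebraMap F K t} = ⊤)
    (q : QF F) (hq : q.Nonsingular) (hh : QF.Hyperbolic (q.map (algebraMap F K))) :
    cls q ∈ ST T := by
  have inj := (algebraMap F K).injective
  obtain ⟨n, a, b, hi⟩ := exists_fam q hq
  have hns : ∀ r ∈ List.ofFn (fun i => QF.bin (a i) (b i)), r.Nonsingular := by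
    intro r hr
    simp only [List.mem_ofFn] at hr
    obtain ⟨i, rfl⟩ := hr
    exact ns_bin _ _
  have hcls : QuotientAddGroup.mk' (ST T) (cls q) = ∑ i, sym T (a i) (b i) := by
    rw [← cls_iso (ns_sumList _ hns) hi, cls_sumList _ hns, List.map_ofFn, List.sum_ofFn, map_sum]
    rfl
  suffices h : ∑ i, sym T (a i) (b i) = 0 by
    rw [h] at hcls
    rw [← QuotientAddGroup.ker_mk' (ST T), AddMonoidHom.mem_ker]
    exact hcls
  choose sqf hsqf using hK
  let sq : K →+* F :=
    { toFun := sqf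
      map_one' := inj (by rw [hsqf]; simp)
      map_zero' := inj (by rw [hsqf]; simp)
      map_mul' := fun x y => inj (by rw [hsqf, map_mul, hsqf, hsqf, mul_pow])
      map_add' := fun x y => inj (by rw [hsqf, map_add, hsqf, hsqf, CharTwo.add_sq]) }
  have hmet := met_iso (iso_symm (iso_map (algebraMap F K) hi)) (met_of_hyperbolic _ hh)
  rw [map_sumList, List.map_ofFn] at hmet
  have hfn : (QF.map (algebraMap F K) ∘ fun i => QF.bin (a i) (b i))
      = fun i => QF.bin (algebraMap F K (a i)) (algebraMap F K (b i)) := by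
    funext i
    exact map_bin _ _ _
  rw [hfn] at hmet
  obtain ⟨e, he⟩ := famEquiv n (fun i => algebraMap F K (a i)) (fun i => algebraMap F K (b i))
  obtain ⟨L, h1, h2⟩ := hmet
  simp only [← toQ_apply] at he
  have hpol : ∀ x y x' y', polar (toQ (QF.sumList (List.ofFn fun i =>
      QF.bin (algebraMap F K (a i)) (algebraMap F K (b i))))) (e (x, y)) (e (x', y'))
      = x ⬝ᵥ y' + y ⬝ᵥ x' := by
    intro x y x' y'
    rw [polar, ← map_add, Prod.mk_add_mk, he, he, he, dotProduct, dotProduct,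
      ← Finset.sum_sub_distrib, ← Finset.sum_sub_distrib, ← Finset.sum_add_distrib]
    refine Finset.sum_congr rfl fun i _ => ?_
    simp only [Pi.add_apply]
    linear_combination (algebraMap F K (a i) * x i * x' i + algebraMap F K (b i) * y i * y' i)
      * (two_zero (F := K))
  refine calc_main (symHom T) (fun a b => sym_comm T a b) (fun b c => sym_wp T b c) sq hsqf
    (fun z a b => sym_move T h0 (fun x => ⟨sqf x, hsqf x⟩) hgen z _ (hsqf z) a b) n a b
    (L.comap (e : _ →ₗ[K] _)) ?_ ?_ ?_
  · intro x y h
    rw [← he]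
    exact h1 _ h
  · intro x y x' y' h h'
    have e1 := h1 _ h
    have e2 := h1 _ h'
    have e3 := h1 _ (L.add_mem h h')
    rw [← hpol]
    change toQ _ _ - toQ _ _ - toQ _ _ = 0
    erw [e1, e2, e3]
    simp
  · intro x y h
    refine h2 _ fun w hw => ?_
    obtain ⟨⟨x', y'⟩, rfl⟩ := e.surjective w
    refine (hpol x y x' y').trans (h x' y' hw)

end calculation

end WK

set_option synthInstance.maxHeartbeats 1000000 in
open QF in
/-- Let `F` have characteristic 2, let `K/F` be purely inseparable of
exponent 1 (`K² ⊆ F`), and let `T ⊆ F` be a 2-independent set (for every finite subset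
`{t₁,…,tₘ} ⊆ T` one has `[F(√t₁,…,√tₘ):F] = [F²(t₁,…,tₘ):F²] = 2^m`) such that
`K = F(√t : t ∈ T)`.  Then `W_q(K/F) = Σ_{t ∈ T} ⟨1,t⟩_b ⊗ W_q(F)`. -/
theorem wittKernel_two_independent_generators
    (F K : Type*) [Field F] [Field K] [Algebra F K] [CharP F 2]
    (hK : ∀ x : K, ∃ y : F, algebraMap F K y = x ^ 2)
    (T : Set F)
    (hTind : ∀ s : Finset F, ↑s ⊆ T →
      Module.finrank (RingHom.fieldRange (frobenius F 2))
        (Algebra.adjoin (RingHom.fieldRange (frobenius F 2)) (s : Set F)) = 2 ^ s.card ∧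
      ∀ r : s → K, (∀ i : s, (r i) ^ 2 = algebraMap F K i.1) →
        Module.finrank F (Algebra.adjoin F (Set.range r)) = 2 ^ s.card)
    (hroot : ∀ t ∈ T, ∃ x : K, x ^ 2 = algebraMap F K t)
    (hgen : Algebra.adjoin F {x : K | ∃ t ∈ T, x ^ 2 = algebraMap F K t} = ⊤) :
    ∀ q : QF F, q.Nonsingular →
      (Hyperbolic (q.map (algebraMap F K)) ↔
        ∃ l : List (F × QF F), (∀ p ∈ l, p.1 ∈ T ∧ p.2.Nonsingular) ∧
          WittEquiv q (sumList (l.map fun p => p.2.orthSum (smul p.1 p.2)))) := by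
  have : CharP K 2 := charP_of_injective_algebraMap (algebraMap F K).injective 2
  have h0 : ∀ t ∈ T, t ≠ 0 := by
    rintro t ht rfl
    have h1 := (hTind {0} (by simpa using ht)).1
    have h2 : Algebra.adjoin (RingHom.fieldRange (frobenius F 2)) (({0} : Finset F) : Set F) = ⊥ := by
      rw [Finset.coe_singleton]
      exact Algebra.adjoin_singleton_zero _ _
    rw [h2] at h1
    simp at h1
  intro q hq
  constructor
  · intro h
    exact WK.exists_list_of_mem T h0 q hq (WK.forward T h0 hK hgen q hq h)
  · rintro ⟨l, hl, hw⟩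
    exact WK.backward T h0 hroot q hq l hl hw
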